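/- Suppose the continuation aggregator satisfies the long-run contractivity inequality |H(x,z,a,v) − H(x,z,a,w)| ≤ β(z) ∫ sup_{x'∈X} |v(x',z') − w(x',z')| Q(z,dz') for all feasible (x,z,a) and all v, w ∈ 𝒱̂ (no condition on r(L_β) is needed), and suppose the Bellman operator T maps 𝒱̂ into itself. Then for all v, w ∈ 𝒱̂ and all n ≥ 1: sup_{(x,z)∈S} |(T^n v)(x,z) − (T^n w)(x,z)| ≤ m_n · sup_{(x,z)∈S} |v(x,z) − w(x,z)|, where m_n := sup_{z∈Z} E_z[∏_{t=0}^{n-1} β(Z_t)]. -/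

import Mathlib

/-!
Along the iterates, a pointwise bound `|v(x,z) - w(x,z)| ≤ g(z)` is turned by the contractivity
inequality into `|T v(x,z) - T w(x,z)| ≤ β(z) ∫ g dQ(z,·) = (L_β g)(z)`. Starting from a constant
`g = c`, the `n`-th iterate is bounded by `L_β^n c = c · E_z[∏_{t<n} β(Z_t)]`.
-/

open MeasureTheory ProbabilityTheory Filter Topology

/-- `expProd Q β n z` is the expectation `E_z[∏_{t=0}^{n-1} β(Z_t)]` of the product of
discount factors along the Markov chain generated by the kernel `Q` and started at `z`,
encoded by the canonical iterated-integral recursion (the empty product is `1`). -/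
noncomputable def expProd {Z : Type*} [MeasurableSpace Z] (Q : ProbabilityTheory.Kernel Z Z)
    (β : Z → ℝ) : ℕ → Z → ℝ
  | 0 => fun _ => 1
  | n + 1 => fun z => β z * ∫ z', expProd Q β n z' ∂(Q z)

/-- `mSup Q β n = sup_{z ∈ Z} E_z[∏_{t=0}^{n-1} β(Z_t)]`. -/
noncomputable def mSup {Z : Type*} [MeasurableSpace Z] (Q : ProbabilityTheory.Kernel Z Z)
    (β : Z → ℝ) (n : ℕ) : ℝ :=
  ⨆ z, expProd Q β n z

/-- The Bellman operator `(T v)(x,z) = sup_{a ∈ Γ(x,z)} H(x,z,a,v)`. -/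
noncomputable def TBell {X Z A : Type*} (H : X → Z → A → ((X × Z) → ℝ) → ℝ)
    (Γ : X → Z → Set A) (v : (X × Z) → ℝ) : (X × Z) → ℝ :=
  fun p => sSup ((fun a => H p.1 p.2 a v) '' Γ p.1 p.2)

section Supremum

variable {ι α : Type*} {s : Set ι}

theorem bddAbove_image_of_le_add_const [Preorder α] [Add α] [AddRightMono α] {f g : ι → α}
    {c : α} (hf : BddAbove (f '' s)) (h : ∀ i ∈ s, g i ≤ f i + c) : BddAbove (g '' s) := by
  obtain ⟨M, hM⟩ := hf
  exact ⟨M + c, Set.forall_mem_image.2 fun i hi =>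
    (h i hi).trans (add_le_add_left (hM (Set.mem_image_of_mem f hi)) c)⟩

theorem sSup_image_le_sSup_image_add_const [ConditionallyCompleteLattice α] [Add α]
    [AddRightMono α] {f g : ι → α} {c : α} (hs : s.Nonempty) (hf : BddAbove (f '' s))
    (h : ∀ i ∈ s, g i ≤ f i + c) : sSup (g '' s) ≤ sSup (f '' s) + c :=
  csSup_le (hs.image g) <| Set.forall_mem_image.2 fun i hi =>
    (h i hi).trans (add_le_add_left (le_csSup hf (Set.mem_image_of_mem f hi)) c)

theorem abs_sSup_image_sub_sSup_image_le {f g : ι → ℝ} {c : ℝ} (hs : s.Nonempty)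
    (h : ∀ i ∈ s, |f i - g i| ≤ c) : |sSup (f '' s) - sSup (g '' s)| ≤ c := by
  have hfg : ∀ i ∈ s, f i ≤ g i + c := fun i hi => by linarith [(abs_le.1 (h i hi)).2]
  have hgf : ∀ i ∈ s, g i ≤ f i + c := fun i hi => by linarith [(abs_le.1 (h i hi)).1]
  by_cases hf : BddAbove (f '' s)
  · have hg : BddAbove (g '' s) := bddAbove_image_of_le_add_const hf hgf
    rw [abs_sub_le_iff, sub_le_iff_le_add', sub_le_iff_le_add']
    exact ⟨sSup_image_le_sSup_image_add_const hs hg hfg,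
      sSup_image_le_sSup_image_add_const hs hf hgf⟩
  · -- Here both suprema take the junk value `0`.
    have hg : ¬BddAbove (g '' s) := fun hg => hf (bddAbove_image_of_le_add_const hg hfg)
    obtain ⟨i, hi⟩ := hs
    rw [Real.sSup_of_not_bddAbove hf, Real.sSup_of_not_bddAbove hg, sub_self, abs_zero]
    exact (abs_nonneg _).trans (h i hi)

theorem bddAbove_range_abs_sub [AddCommGroup α] [LinearOrder α] [IsOrderedAddMonoid α]
    {f g : ι → α} (hf : ∃ M, ∀ i, |f i| ≤ M) (hg : ∃ M, ∀ i, |g i| ≤ M) :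
    BddAbove (Set.range fun i => |f i - g i|) := by
  obtain ⟨M, hM⟩ := hf
  obtain ⟨N, hN⟩ := hg
  exact ⟨M + N, Set.forall_mem_range.2 fun i => (abs_sub _ _).trans (add_le_add (hM i) (hN i))⟩

end Supremum

section ExpProd

variable {Z : Type*} [MeasurableSpace Z] {Q : Kernel Z Z} {β : Z → ℝ}

theorem expProd_nonneg (hβ : ∀ z, 0 ≤ β z) (n : ℕ) (z : Z) : 0 ≤ expProd Q β n z := by
  induction n generalizing z with
  | zero => exact zero_le_one
  | succ n ih => exact mul_nonneg (hβ z) (integral_nonneg ih)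

theorem measurable_expProd (hβ : Measurable β) (n : ℕ) :
    Measurable (expProd Q β n) := by
  induction n with
  | zero => exact measurable_const
  | succ n ih => exact hβ.mul ih.stronglyMeasurable.integral_kernel.measurable

theorem expProd_le_pow [IsFiniteKernel Q] {C : ℝ} (hβ : ∀ z, 0 ≤ β z) (hC : ∀ z, β z ≤ C)
    (n : ℕ) (z : Z) : expProd Q β n z ≤ (C * Q.bound.toReal) ^ n := by
  have hC₀ : 0 ≤ C := (hβ z).trans (hC z)
  induction n generalizing z with
  | zero => exact le_rfl
  | succ n ih =>
    have hmass : (Q z).real Set.univ ≤ Q.bound.toReal :=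
      ENNReal.toReal_mono Q.bound_ne_top (Q.measure_le_bound z Set.univ)
    have hint : ∫ z', expProd Q β n z' ∂(Q z) ≤
        Q.bound.toReal * (C * Q.bound.toReal) ^ n := calc
      _ ≤ ∫ _, (C * Q.bound.toReal) ^ n ∂(Q z) :=
        integral_mono_of_nonneg (ae_of_all _ (expProd_nonneg hβ n)) (integrable_const _)
          (ae_of_all _ ih)
      _ = (Q z).real Set.univ * (C * Q.bound.toReal) ^ n := by
        rw [integral_const, smul_eq_mul]
      _ ≤ Q.bound.toReal * (C * Q.bound.toReal) ^ n := by gcongr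
    calc
      expProd Q β (n + 1) z ≤ C * (Q.bound.toReal * (C * Q.bound.toReal) ^ n) :=
        mul_le_mul (hC z) hint (integral_nonneg (expProd_nonneg hβ n)) hC₀
      _ = (C * Q.bound.toReal) ^ (n + 1) := by ring

theorem integrable_expProd [IsFiniteKernel Q] (hβm : Measurable β) (hβ : ∀ z, 0 ≤ β z)
    (hβb : ∃ C, ∀ z, β z ≤ C) (n : ℕ) (μ : Measure Z) [IsFiniteMeasure μ] :
    Integrable (expProd Q β n) μ := by
  obtain ⟨C, hC⟩ := hβb
  refine .of_bound (measurable_expProd hβm n).aestronglyMeasurable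
    ((C * Q.bound.toReal) ^ n) (ae_of_all _ fun z => ?_)
  rw [Real.norm_of_nonneg (expProd_nonneg hβ n z)]
  exact expProd_le_pow hβ hC n z

theorem expProd_le_mSup [IsFiniteKernel Q] (hβ : ∀ z, 0 ≤ β z) (hβb : ∃ C, ∀ z, β z ≤ C)
    (n : ℕ) (z : Z) : expProd Q β n z ≤ mSup Q β n := by
  obtain ⟨C, hC⟩ := hβb
  exact le_ciSup ⟨_, Set.forall_mem_range.2 (expProd_le_pow hβ hC n)⟩ z

end ExpProd

section Iterates

variable {X Z : Type*} [MeasurableSpace Z]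

theorem integral_iSup_le_of_le [Nonempty X] {μ : Measure Z} {f : X → Z → ℝ} {g : Z → ℝ}
    (hf : ∀ᵐ z ∂μ, ∀ x, 0 ≤ f x z) (hg : Integrable g μ) (hfg : ∀ᵐ z ∂μ, ∀ x, f x z ≤ g z) :
    ∫ z, ⨆ x, f x z ∂μ ≤ ∫ z, g z ∂μ :=
  integral_mono_of_nonneg (hf.mono fun _ hz => Real.iSup_nonneg hz) hg
    (hfg.mono fun _ hz => ciSup_le hz)

variable {Q : Kernel Z Z} [IsFiniteKernel Q] {β : Z → ℝ} {V : Set (X × Z → ℝ)}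
  {T : (X × Z → ℝ) → X × Z → ℝ}

theorem abs_iterate_sub_iterate_le_expProd_mul (hβm : Measurable β) (hβ : ∀ z, 0 ≤ β z)
    (hβb : ∃ C, ∀ z, β z ≤ C) (hTV : Set.MapsTo T V V)
    (hT : ∀ v ∈ V, ∀ w ∈ V, ∀ x z,
      |T v (x, z) - T w (x, z)| ≤ β z * ∫ z', (⨆ x', |v (x', z') - w (x', z')|) ∂(Q z))
    {v w : X × Z → ℝ} (hv : v ∈ V) (hw : w ∈ V) {c : ℝ} (hc : ∀ p, |v p - w p| ≤ c)
    (n : ℕ) (x : X) (z : Z) :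
    |T^[n] v (x, z) - T^[n] w (x, z)| ≤ expProd Q β n z * c := by
  have : Nonempty X := ⟨x⟩
  induction n generalizing x z with
  | zero => simpa only [expProd, one_mul, Function.iterate_zero_apply] using hc (x, z)
  | succ n ih =>
    rw [Function.iterate_succ_apply', Function.iterate_succ_apply']
    calc
      _ ≤ β z * ∫ z', (⨆ x', |T^[n] v (x', z') - T^[n] w (x', z')|) ∂(Q z) :=
        hT _ (hTV.iterate n hv) _ (hTV.iterate n hw) x z
      _ ≤ β z * ∫ z', expProd Q β n z' * c ∂(Q z) :=
        mul_le_mul_of_nonneg_left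
          (integral_iSup_le_of_le (ae_of_all _ fun _ _ => abs_nonneg _)
            ((integrable_expProd hβm hβ hβb n (Q z)).mul_const c)
            (ae_of_all _ fun z' x' => ih x' z')) (hβ z)
      _ = expProd Q β (n + 1) z * c := by
        rw [integral_mul_const, ← mul_assoc, expProd]

end Iterates

theorem bellman_operator_contraction_estimate_general
    {X Z A : Type*} [Nonempty X] [MeasurableSpace Z] [Nonempty Z]
    (Q : Kernel Z Z) [IsFiniteKernel Q]
    (Γ : X → Z → Set A) (hΓ : ∀ x z, (Γ x z).Nonempty)
    (H : X → Z → A → ((X × Z) → ℝ) → ℝ) (𝒱hat : Set ((X × Z) → ℝ))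
    (β : Z → ℝ) (hβm : Measurable β) (hβ0 : ∀ z, 0 ≤ β z) (hβb : ∃ C, ∀ z, β z ≤ C)
    (hH : ∀ v ∈ 𝒱hat, ∀ w ∈ 𝒱hat, ∀ x z a, a ∈ Γ x z →
      |H x z a v - H x z a w| ≤
        β z * ∫ z', (⨆ x' : X, |v (x', z') - w (x', z')|) ∂(Q z))
    (hself : ∀ v ∈ 𝒱hat, TBell H Γ v ∈ 𝒱hat)
    {v w : X × Z → ℝ} (hv : v ∈ 𝒱hat) (hw : w ∈ 𝒱hat)
    (hvw : BddAbove (Set.range fun p => |v p - w p|)) (n : ℕ) :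
    (⨆ p : X × Z, |(TBell H Γ)^[n] v p - (TBell H Γ)^[n] w p|) ≤
      mSup Q β n * ⨆ p : X × Z, |v p - w p| := by
  have hT : ∀ v ∈ 𝒱hat, ∀ w ∈ 𝒱hat, ∀ x z, |TBell H Γ v (x, z) - TBell H Γ w (x, z)| ≤
      β z * ∫ z', (⨆ x', |v (x', z') - w (x', z')|) ∂(Q z) := fun v hv w hw x z =>
    abs_sSup_image_sub_sSup_image_le (hΓ x z) (hH v hv w hw x z)
  refine ciSup_le fun ⟨x, z⟩ => ?_
  calc
    _ ≤ expProd Q β n z * ⨆ p, |v p - w p| :=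
      abs_iterate_sub_iterate_le_expProd_mul hβm hβ0 hβb hself hT hv hw (le_ciSup hvw) n x z
    _ ≤ mSup Q β n * ⨆ p, |v p - w p| :=
      mul_le_mul_of_nonneg_right (expProd_le_mSup hβ0 hβb n z)
        (Real.iSup_nonneg fun _ => abs_nonneg _)

/-- If the continuation aggregator satisfies the long-run contractivity inequality
(with no condition on `r(L_β)`) on `𝒱̂`, and the Bellman operator `T` maps `𝒱̂` into
itself, then for all `v, w ∈ 𝒱̂` and `n ≥ 1`,
`sup_S |T^n v − T^n w| ≤ m_n · sup_S |v − w|`, where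
`m_n = sup_z E_z[∏_{t=0}^{n-1} β(Z_t)]`. -/
theorem bellman_operator_contraction_estimate
    {X Z A : Type*} [MetricSpace X] [MeasurableSpace X] [BorelSpace X] [Nonempty X]
    [MetricSpace Z] [MeasurableSpace Z] [BorelSpace Z] [Nonempty Z]
    [MetricSpace A] [TopologicalSpace.SeparableSpace A]
    (Q : ProbabilityTheory.Kernel Z Z) [IsMarkovKernel Q]
    (Γ : X → Z → Set A) (hΓ : ∀ x z, (Γ x z).Nonempty)
    (H : X → Z → A → ((X × Z) → ℝ) → ℝ)
    -- `𝒱̂` is a set of bounded Borel measurable real functions on `S = X × Z`.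
    (𝒱hat : Set ((X × Z) → ℝ))
    (h𝒱hat : ∀ v ∈ 𝒱hat, Measurable v ∧ ∃ M, ∀ p, |v p| ≤ M)
    (β : Z → ℝ) (hβm : Measurable β) (hβ0 : ∀ z, 0 ≤ β z) (hβb : ∃ C, ∀ z, β z ≤ C)
    -- Long-run contractivity inequality on `𝒱̂`.
    (hH : ∀ v ∈ 𝒱hat, ∀ w ∈ 𝒱hat, ∀ x z a, a ∈ Γ x z →
      |H x z a v - H x z a w| ≤
        β z * ∫ z', (⨆ x' : X, |v (x', z') - w (x', z')|) ∂(Q z))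
    -- `T` is a self-map on `𝒱̂` (and is real-valued there).
    (hself : ∀ v ∈ 𝒱hat, TBell H Γ v ∈ 𝒱hat) :
    ∀ v ∈ 𝒱hat, ∀ w ∈ 𝒱hat, ∀ n : ℕ, 1 ≤ n →
      (⨆ p : X × Z, |(TBell H Γ)^[n] v p - (TBell H Γ)^[n] w p|) ≤
        mSup Q β n * ⨆ p : X × Z, |v p - w p| := by
  intro v hv w hw n _
  exact bellman_operator_contraction_estimate_general Q Γ hΓ H 𝒱hat β hβm hβ0 hβb hH hself hv hw
    (bddAbove_range_abs_sub (h𝒱hat v hv).2 (h𝒱hat w hw).2) n
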